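/- arXiv:0812.1276 — 3 statements merged into one kernel-verified Lean document; each statement's English description precedes it below -/
import Mathlib

section
/- Every infinite prime graph that contains no infinite clique contains an induced subgraph isomorphic to at least one of the graphs G0, G1, G2, G3. -/
set_option autoImplicit false

/-- A set of vertices is autonomous if every vertex outside it is adjacent
either to all of its elements or to none of them. -/
def Autonomous {V : Type*} (G : SimpleGraph V) (A : Set V) : Prop :=
  ∀ v ∉ A, (∀ a ∈ A, G.Adj v a) ∨ (∀ a ∈ A, ¬ G.Adj v a)

/-- A graph is prime if it has more than three vertices and its only
autonomous sets are the trivial ones. -/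
def PrimeGraph {V : Type*} (G : SimpleGraph V) : Prop :=
  3 < Cardinal.mk V ∧
    ∀ A : Set V, Autonomous G A → A = ∅ ∨ (∃ x, A = {x}) ∨ A = Set.univ

/-- The bipartite graph `G0` on `A ∪ B` (`A, B` the two copies of `ℕ`),
with an edge `{a_i, b_j}` iff `i ≠ j`. -/
def G0 : SimpleGraph (ℕ ⊕ ℕ) :=
  SimpleGraph.fromRel (fun u v => ∃ i j : ℕ, u = Sum.inl i ∧ v = Sum.inr j ∧ i ≠ j)

/-- The bipartite graph `G1` (half complete bipartite graph),
with an edge `{a_i, b_j}` iff `i < j`. -/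
def G1 : SimpleGraph (ℕ ⊕ ℕ) :=
  SimpleGraph.fromRel (fun u v => ∃ i j : ℕ, u = Sum.inl i ∧ v = Sum.inr j ∧ i < j)

/-- The one-way infinite path `G2`, with an edge `{a_i, b_j}` iff `j = i` or `j = i + 1`. -/
def G2 : SimpleGraph (ℕ ⊕ ℕ) :=
  SimpleGraph.fromRel (fun u v =>
    ∃ i j : ℕ, u = Sum.inl i ∧ v = Sum.inr j ∧ (j = i ∨ j = i + 1))

/-- The graph `G3`: countably many disjoint edges `{a_i, b_i}` together with an
extra vertex `c` (here `none`) adjacent to every `b_i`. -/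
def G3 : SimpleGraph (Option (ℕ ⊕ ℕ)) :=
  SimpleGraph.fromRel (fun u v =>
    (∃ i : ℕ, u = some (Sum.inl i) ∧ v = some (Sum.inr i)) ∨
    (∃ i : ℕ, u = none ∧ v = some (Sum.inr i)))

open Filter in
lemma ultra_const {α κ : Type*} [Finite κ] (U : Ultrafilter α) (f : α → κ) :
    ∃ k, ∀ᶠ i in (U : Filter α), f i = k := by
  rw [← Ultrafilter.eventually_exists_iff]
  exact Eventually.of_forall fun i => ⟨f i, rfl⟩

open Filter in
/-- Infinite Ramsey theorem for pairs with finitely many colours. -/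
lemma ramsey_pairs {κ : Type*} [Finite κ] (c : ℕ → ℕ → κ) :
    ∃ (g : ℕ → ℕ) (k : κ), (∀ i j, i < j → g i < g j) ∧ ∀ i j, i < j → c (g i) (g j) = k := by
  choose col hcol using fun i => ultra_const (hyperfilter ℕ) (c i)
  obtain ⟨k, hk⟩ := ultra_const (hyperfilter ℕ) col
  obtain ⟨g, -, hg⟩ := exists_seq_of_forall_finset_exists (fun i => col i = k)
    (fun i j => i < j ∧ c i j = k) (by
      intro s hs
      have h1 : ∀ᶠ j in (hyperfilter ℕ : Filter ℕ), ∀ x ∈ s, x < j ∧ c x j = k := by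
        rw [Finset.eventually_all]
        intro x hx
        refine Eventually.and ?_ ?_
        · exact Nat.hyperfilter_le_atTop (eventually_gt_atTop x)
        · have := hcol x
          rw [hs x hx] at this
          exact this
      exact (hk.and h1).exists)
  exact ⟨g, k, fun i j h => (hg i j h).1, fun i j h => (hg i j h).2⟩

/-- A map preserving and reflecting adjacency from a twin-free graph is an embedding. -/
lemma embeds_of_iff {U V : Type*} {H : SimpleGraph U} {G : SimpleGraph V} (f : U → V)
    (htwin : ∀ u v, (∀ w, H.Adj u w ↔ H.Adj v w) → u = v)
    (h : ∀ u v, G.Adj (f u) (f v) ↔ H.Adj u v) : Nonempty (H ↪g G) := by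
  refine ⟨⟨⟨f, ?_⟩, ?_⟩⟩
  · intro u v huv
    apply htwin
    intro w
    rw [← h, ← h, huv]
  · intro u v
    exact h u v

lemma G0_embeds {V : Type*} {G : SimpleGraph V} (a b : ℕ → V)
    (ha : ∀ i j, ¬ G.Adj (a i) (a j)) (hb : ∀ i j, ¬ G.Adj (b i) (b j))
    (h : ∀ i j, G.Adj (a i) (b j) ↔ i ≠ j) : Nonempty (G0 ↪g G) := by
  refine embeds_of_iff (Sum.elim a b) ?_ ?_
  · rintro (i | i) (j | j) hw
    · have := hw (Sum.inr i)
      simp [G0] at this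
      rw [this]
    · have := hw (Sum.inr (i+1))
      simp [G0] at this
    · have := hw (Sum.inl (i+1))
      simp [G0] at this
    · have := hw (Sum.inl i)
      simp [G0] at this
      rw [this]
  · rintro (i | i) (j | j)
    · simp [G0, ha]
    · simp [G0, h]
    · simp [G0, G.adj_comm (b i), h]
    · simp [G0, hb]

lemma G1_embeds {V : Type*} {G : SimpleGraph V} (a b : ℕ → V)
    (ha : ∀ i j, ¬ G.Adj (a i) (a j)) (hb : ∀ i j, ¬ G.Adj (b i) (b j))
    (h : ∀ i j, G.Adj (a i) (b j) ↔ i < j) : Nonempty (G1 ↪g G) := by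
  refine embeds_of_iff (Sum.elim a b) ?_ ?_
  · rintro (i | i) (j | j) hw
    · have h1 := hw (Sum.inr (i+1))
      have h2 := hw (Sum.inr (j+1))
      simp [G1] at h1 h2
      congr 1; omega
    · have := hw (Sum.inr (i+1))
      simp [G1] at this
    · have := hw (Sum.inr (j+1))
      simp [G1] at this
    · have h1 := hw (Sum.inl i)
      have h2 := hw (Sum.inl j)
      simp [G1] at h1 h2
      congr 1; omega
  · rintro (i | i) (j | j)
    · simp [G1, ha]
    · simp [G1, h]
    · simp [G1, G.adj_comm (b i), h]
    · simp [G1, hb]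

lemma G2_embeds {V : Type*} {G : SimpleGraph V} (f : ℕ → V)
    (h : ∀ i j, G.Adj (f i) (f j) ↔ (j = i + 1 ∨ i = j + 1)) : Nonempty (G2 ↪g G) := by
  refine embeds_of_iff (Sum.elim (fun i => f (2*i+1)) (fun i => f (2*i))) ?_ ?_
  · rintro (i | i) (j | j) hw
    · have h1 := hw (Sum.inr (i+1))
      have h2 := hw (Sum.inr i)
      simp [G2] at h1 h2
      congr 1; omega
    · have := hw (Sum.inr i)
      simp [G2] at this
    · have := hw (Sum.inl i)
      simp [G2] at this
    · have h1 := hw (Sum.inl i)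
      have h2 := hw (Sum.inl j)
      simp [G2] at h1 h2
      congr 1; omega
  · rintro (i | i) (j | j)
    · simp [G2, h]; omega
    · simp [G2, h]; omega
    · simp [G2, h]; omega
    · simp [G2, h]; omega

lemma G3_embeds {V : Type*} {G : SimpleGraph V} (a b : ℕ → V) (c : V)
    (ha : ∀ i j, ¬ G.Adj (a i) (a j)) (hb : ∀ i j, ¬ G.Adj (b i) (b j))
    (h : ∀ i j, G.Adj (a i) (b j) ↔ i = j)
    (hca : ∀ i, ¬ G.Adj c (a i)) (hcb : ∀ i, G.Adj c (b i)) : Nonempty (G3 ↪g G) := by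
  refine embeds_of_iff (fun o => o.elim c (Sum.elim a b)) ?_ ?_
  · rintro (_ | i | i) (_ | j | j) hw
    · rfl
    · have := hw (some (Sum.inr (j+1)))
      simp [G3] at this
    · have := hw none
      simp [G3] at this
    · have := hw (some (Sum.inr (i+1)))
      simp [G3] at this
    · have := hw (some (Sum.inr i))
      simp [G3] at this
      rw [this]
    · have := hw none
      simp [G3] at this
    · have := hw none
      simp [G3] at this
    · have := hw none
      simp [G3] at this
    · have := hw (some (Sum.inl i))
      simp [G3] at this
      rw [this]
  · rintro (_ | i | i) (_ | j | j)
    · simp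
    · simp [G3, hca]
    · simp [G3, hcb]
    · simp [G3, G.adj_comm _ c, hca]
    · simp [G3, ha]
    · simp [G3, h, eq_comm]
    · simp [G3, G.adj_comm _ c, hcb]
    · simp [G3, G.adj_comm (b i), h, eq_comm]
    · simp [G3, hb]

/-- König: a locally finite graph with an infinite component contains an induced ray. -/
lemma konig_ray {V : Type*} (G : SimpleGraph V) (hlf : ∀ v, (G.neighborSet v).Finite) (r : V)
    (hr : {w | G.Reachable r w}.Infinite) : Nonempty (G2 ↪g G) := by
  let Good : V → Prop := fun v => G.Reachable r v ∧
    {w | G.Reachable v w ∧ G.dist r w = G.dist r v + G.dist v w}.Infinite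
  have hstep : ∀ v : {v // Good v}, ∃ v' : {v // Good v}, G.Adj v v' ∧
      G.dist r v' = G.dist r v + 1 := by
    rintro ⟨v, hv, hinf⟩
    by_contra hcon
    push Not at hcon
    apply hinf
    have hfin : (⋃ v' ∈ {v' | G.Adj v v' ∧ G.dist r v' = G.dist r v + 1},
        {w | G.Reachable v' w ∧ G.dist r w = G.dist r v' + G.dist v' w}).Finite := by
      apply Set.Finite.biUnion
      · exact (hlf v).subset fun x hx => hx.1
      · rintro v' ⟨h1, h2⟩
        by_contra hi
        exact hcon ⟨v', hv.trans h1.reachable, hi⟩ h1 h2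
    refine (hfin.union (Set.finite_singleton v)).subset ?_
    rintro w ⟨hw, hd⟩
    by_cases hwv : w = v
    · right; exact hwv
    left
    obtain ⟨p, hp⟩ := hw.exists_walk_length_eq_dist
    cases p with
    | nil => exact absurd rfl hwv
    | @cons _ v' _ hadj q =>
      simp only [SimpleGraph.Walk.length_cons] at hp
      have h1 := SimpleGraph.dist_le q
      have h2 : G.dist r v' ≤ G.dist r v + G.dist v v' := hv.dist_triangle_left v'
      have h3 : G.dist v v' = 1 := SimpleGraph.dist_eq_one_iff_adj.2 hadj
      have h4 : G.dist r w ≤ G.dist r v' + G.dist v' w :=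
        (hv.trans hadj.reachable).dist_triangle_left w
      simp only [Set.mem_iUnion, Set.mem_ofPred_eq]
      refine ⟨v', ⟨hadj, by omega⟩, q.reachable, by omega⟩
  choose F hF1 hF2 using hstep
  have hgr : Good r := ⟨SimpleGraph.Reachable.refl r, by simpa using hr⟩
  let s : ℕ → {v // Good v} := fun n => Nat.rec ⟨r, hgr⟩ (fun _ v => F v) n
  have hs : ∀ n, s (n+1) = F (s n) := fun n => rfl
  have hd : ∀ n : ℕ, G.dist r (s n).1 = n := by
    intro n
    induction n with
    | zero => simp [s]
    | succ n ih => rw [hs, hF2, ih]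
  refine G2_embeds (fun n => (s n).1) ?_
  intro i j
  constructor
  · intro h
    have h1 : G.dist r (s i).1 ≤ G.dist r (s j).1 + G.dist (s j).1 (s i).1 :=
      (s j).2.1.dist_triangle_left _
    have h2 : G.dist r (s j).1 ≤ G.dist r (s i).1 + G.dist (s i).1 (s j).1 :=
      (s i).2.1.dist_triangle_left _
    have h3 : G.dist (s i).1 (s j).1 = 1 := SimpleGraph.dist_eq_one_iff_adj.2 h
    have h4 : G.dist (s j).1 (s i).1 = 1 := SimpleGraph.dist_eq_one_iff_adj.2 h.symm
    rw [hd, hd] at h1 h2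
    have hne : i ≠ j := by
      rintro rfl
      exact G.loopless.irrefl _ h
    omega
  · rintro (rfl | rfl)
    · rw [hs]; exact hF1 _
    · rw [hs]; exact (hF1 _).symm

/-- The main pattern lemma. -/
lemma pattern_embeds {V : Type*} (G : SimpleGraph V)
    (hclique : ¬ ∃ S : Set V, S.Infinite ∧ G.IsClique S) (K : Finset V) (a d : ℕ → V)
    (haK : ∀ i, ∀ k ∈ K, G.Adj k (a i)) (ha : ∀ i j, ¬ G.Adj (a i) (a j))
    (hdK : ∀ i, ∃ k ∈ K, ¬ G.Adj k (d i))
    (h : ∀ i j, i < j → (G.Adj (d i) (a j) ↔ ¬ G.Adj (d i) (a i))) :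
    Nonempty (G0 ↪g G) ∨ Nonempty (G1 ↪g G) ∨ Nonempty (G3 ↪g G) := by
  choose k hkK hkd using hdK
  obtain ⟨g, ⟨δ, ε, γ, c⟩, hg, hcol⟩ := ramsey_pairs
    (fun i j => ((G.Adj (d i) (d j), G.Adj (d i) (a i), G.Adj (d j) (a i), ⟨k i, hkK i⟩) :
      Prop × Prop × Prop × K))
  simp only [Prod.mk.injEq] at hcol
  have hδ : ∀ i j, i < j → (G.Adj (d (g i)) (d (g j)) ↔ δ) := fun i j hij => by
    rw [(hcol i j hij).1]
  have hε : ∀ i, (G.Adj (d (g i)) (a (g i)) ↔ ε) := fun i => by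
    rw [(hcol i (i+1) (by omega)).2.1]
  have hγ : ∀ i j, i < j → (G.Adj (d (g j)) (a (g i)) ↔ γ) := fun i j hij => by
    rw [(hcol i j hij).2.2.1]
  have hc : ∀ i, k (g i) = c := fun i => by
    rw [← (hcol i (i+1) (by omega)).2.2.2]
  have hα : ∀ i j, i < j → (G.Adj (d (g i)) (a (g j)) ↔ ¬ ε) := fun i j hij => by
    rw [h _ _ (hg i j hij), hε]
  clear hcol
  by_cases hδ' : δ
  · exfalso
    apply hclique
    have hadj : ∀ i j, i ≠ j → G.Adj (d (g i)) (d (g j)) := by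
      intro i j hij
      rcases lt_or_gt_of_ne hij with hl | hl
      · exact (hδ i j hl).2 hδ'
      · exact ((hδ j i hl).2 hδ').symm
    refine ⟨Set.range (fun i => d (g i)), Set.infinite_range_of_injective ?_, ?_⟩
    · intro i j hij
      by_contra hne
      exact (hadj i j hne).ne hij
    · rintro _ ⟨i, rfl⟩ _ ⟨j, rfl⟩ hne
      exact hadj i j (fun h => hne (by rw [h]))
  have hd : ∀ i j, ¬ G.Adj (d (g i)) (d (g j)) := by
    intro i j
    rcases lt_trichotomy i j with hl | rfl | hl
    · rw [hδ i j hl]; exact hδ'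
    · exact G.loopless.irrefl _
    · rw [G.adj_comm, hδ j i hl]; exact hδ'
  by_cases he : ε <;> by_cases hγ' : γ
  · right; left
    refine G1_embeds (fun i => a (g (i+1))) (fun i => d (g i)) (fun i j => ha _ _)
      (fun i j => hd _ _) ?_
    intro i j
    rw [G.adj_comm]
    rcases lt_trichotomy (i+1) j with hl | hl | hl
    · rw [hγ _ _ hl]; simp [hγ']; omega
    · subst hl; rw [hε]; simp [he]
    · rw [hα _ _ hl]; simp [he]; omega
  · right; right
    refine G3_embeds (fun i => d (g i)) (fun i => a (g i)) (c : V) (fun i j => hd _ _)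
      (fun i j => ha _ _) ?_ (fun i => by rw [← hc i]; exact hkd _) (fun i => haK _ _ c.2)
    intro i j
    rcases lt_trichotomy i j with hl | rfl | hl
    · rw [hα _ _ hl]; simp [he]; omega
    · rw [hε]; simp [he]
    · rw [hγ _ _ hl]; simp [hγ']; omega
  · left
    refine G0_embeds (fun i => d (g i)) (fun i => a (g i)) (fun i j => hd _ _)
      (fun i j => ha _ _) ?_
    intro i j
    rcases lt_trichotomy i j with hl | rfl | hl
    · rw [hα _ _ hl]; simp [he]; omega
    · rw [hε]; simp [he]
    · rw [hγ _ _ hl]; simp [hγ']; omega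
  · right; left
    refine G1_embeds (fun i => d (g i)) (fun i => a (g i)) (fun i j => hd _ _)
      (fun i j => ha _ _) ?_
    intro i j
    rcases lt_trichotomy i j with hl | rfl | hl
    · rw [hα _ _ hl]; simp [he, hl]
    · rw [hε]; simp [he]
    · rw [hγ _ _ hl]; simp [hγ']; omega

/-- A finite set with at least two elements has a splitter. -/
lemma exists_splitter {V : Type*} [Infinite V] (G : SimpleGraph V) (hprime : PrimeGraph G)
    (C : Set V) (hC : C.Finite) (p q : V) (hp : p ∈ C) (hq : q ∈ C) (hpq : p ≠ q) :
    ∃ d ∉ C, ∃ x ∈ C, ∃ y ∈ C, G.Adj d x ∧ ¬ G.Adj d y := by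
  by_contra hcon
  have haut : Autonomous G C := by
    intro v hv
    by_contra h
    push Not at h
    obtain ⟨⟨y, hy, hvy⟩, x, hx, hvx⟩ := h
    exact hcon ⟨v, hv, x, hx, y, hy, hvx, hvy⟩
  rcases hprime.2 C haut with h | ⟨x, h⟩ | h
  · rw [h] at hp; exact hp
  · rw [h] at hp hq
    exact hpq (hp.trans hq.symm)
  · rw [h] at hC
    exact Set.infinite_univ hC

open Filter in
/-- Case of infinitely many isolated vertices in the common neighbourhood. -/
lemma isolated_case {V : Type*} [Infinite V] (G : SimpleGraph V) (hprime : PrimeGraph G)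
    (hclique : ¬ ∃ S : Set V, S.Infinite ∧ G.IsClique S) (K : Finset V)
    (hT : {w | (∀ k ∈ K, G.Adj k w) ∧ ∀ v, (∀ k ∈ K, G.Adj k v) → ¬ G.Adj v w}.Infinite) :
    Nonempty (G0 ↪g G) ∨ Nonempty (G1 ↪g G) ∨ Nonempty (G3 ↪g G) := by
  set T := {w | (∀ k ∈ K, G.Adj k w) ∧ ∀ v, (∀ k ∈ K, G.Adj k v) → ¬ G.Adj v w} with hTdef
  have : Infinite T := hT.to_subtype
  let val : V → Prop := fun d => ∀ᶠ y : T in (hyperfilter T : Filter T), G.Adj d (y : V)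
  let P : T → Prop := fun a => ∃ d, (G.Adj d a ↔ ¬ val d)
  have hPfin : {a : T | ¬ P a}.Finite := by
    apply Set.Subsingleton.finite
    intro a ha b hb
    by_contra hab
    have hab' : (a : V) ≠ b := fun h => hab (Subtype.ext h)
    obtain ⟨d, -, x, hx, y, hy, hdx, hdy⟩ := exists_splitter G hprime {(a : V), (b : V)}
      (by simp) a b (by simp) (by simp) hab'
    have h1 : G.Adj d a ↔ val d := by
      by_contra h; exact ha ⟨d, by tauto⟩
    have h2 : G.Adj d b ↔ val d := by
      by_contra h; exact hb ⟨d, by tauto⟩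
    rcases hx with rfl | rfl <;> rcases hy with rfl | rfl <;> tauto
  have hPev : ∀ᶠ a in (hyperfilter T : Filter T), P a := by
    have := compl_mem_hyperfilter_of_finite hPfin
    filter_upwards [this] with a ha
    simpa using ha
  have : Nonempty V := inferInstance
  choose! d hd using fun (a : T) (h : P a) => h
  obtain ⟨f, hf, hfr⟩ := exists_seq_of_forall_finset_exists P
    (fun a y => (G.Adj (d a) y ↔ ¬ G.Adj (d a) a)) (by
      intro s hs
      have h1 : ∀ᶠ y : T in (hyperfilter T : Filter T), ∀ a ∈ s,
          (G.Adj (d a) y ↔ ¬ G.Adj (d a) a) := by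
        rw [Finset.eventually_all]
        intro a ha
        have hda := hd a (hs a ha)
        by_cases hv : val (d a)
        · filter_upwards [hv] with y hy
          tauto
        · have hv' := Ultrafilter.eventually_not.2 hv
          filter_upwards [hv'] with y hy
          tauto
      exact (hPev.and h1).exists)
  refine pattern_embeds G hclique K (fun i => (f i : V)) (fun i => d (f i))
    (fun i => (f i).2.1) (fun i j => (f j).2.2 _ (f i).2.1) ?_ hfr
  intro i
  by_contra hcon
  push Not at hcon
  have hdi := hd _ (hf i)
  have h1 : ∀ w : T, ¬ G.Adj (d (f i)) w := fun w => w.2.2 _ hcon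
  have h2 : ¬ val (d (f i)) := by
    intro hv
    obtain ⟨w, hw⟩ := hv.exists
    exact h1 w hw
  exact h1 _ (hdi.2 h2)

/-- Case of infinitely many pairwise anticomplete split edges. -/
lemma edge_case {V : Type*} (G : SimpleGraph V)
    (hclique : ¬ ∃ S : Set V, S.Infinite ∧ G.IsClique S) (K : Finset V) (p q d : ℕ → V)
    (hpK : ∀ i, ∀ k ∈ K, G.Adj k (p i)) (hqK : ∀ i, ∀ k ∈ K, G.Adj k (q i))
    (hdK : ∀ i, ∃ k ∈ K, ¬ G.Adj k (d i))
    (hpp : ∀ i j, ¬ G.Adj (p i) (p j)) (hqq : ∀ i j, ¬ G.Adj (q i) (q j))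
    (hpq : ∀ i j, G.Adj (p i) (q j) ↔ i = j)
    (hdp : ∀ i, G.Adj (d i) (p i)) (hdq : ∀ i, ¬ G.Adj (d i) (q i)) :
    Nonempty (G0 ↪g G) ∨ Nonempty (G1 ↪g G) ∨ Nonempty (G3 ↪g G) := by
  obtain ⟨g, ⟨α, β⟩, hg, hcol⟩ := ramsey_pairs
    (fun i j => ((G.Adj (d i) (p j), G.Adj (d i) (q j)) : Prop × Prop))
  simp only [Prod.mk.injEq] at hcol
  have hα : ∀ i j, i < j → (G.Adj (d (g i)) (p (g j)) ↔ α) := fun i j hij => by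
    rw [(hcol i j hij).1]
  have hβ : ∀ i j, i < j → (G.Adj (d (g i)) (q (g j)) ↔ β) := fun i j hij => by
    rw [(hcol i j hij).2]
  have hginj : ∀ i j, g i = g j ↔ i = j := by
    intro i j
    constructor
    · intro h
      rcases lt_trichotomy i j with hl | hl | hl
      · have := hg _ _ hl; omega
      · exact hl
      · have := hg _ _ hl; omega
    · rintro rfl; rfl
  by_cases ha : α <;> by_cases hb : β
  · refine pattern_embeds G hclique K (fun i => q (g i)) (fun i => d (g i)) (fun i => hqK _)
      (fun i j => hqq _ _) (fun i => hdK _) ?_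
    intro i j hij
    simp [hβ i j hij, hb, hdq]
  · right; right
    refine G3_embeds (fun i => q (g (i+1))) (fun i => p (g (i+1))) (d (g 0)) (fun i j => hqq _ _)
      (fun i j => hpp _ _) ?_ (fun i => by simp [hβ 0 (i+1), hb]) (fun i => by simp [hα 0 (i+1), ha])
    intro i j
    rw [G.adj_comm, hpq, hginj]; omega
  · right; right
    refine G3_embeds (fun i => p (g (i+1))) (fun i => q (g (i+1))) (d (g 0)) (fun i j => hpp _ _)
      (fun i j => hqq _ _) ?_ (fun i => by simp [hα 0 (i+1), ha]) (fun i => by simp [hβ 0 (i+1), hb])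
    intro i j
    rw [hpq, hginj]; omega
  · refine pattern_embeds G hclique K (fun i => p (g i)) (fun i => d (g i)) (fun i => hpK _)
      (fun i j => hpp _ _) (fun i => hdK _) ?_
    intro i j hij
    simp [hα i j hij, ha, hdp]

/-- The extension step. -/
lemma clique_step {V : Type*} [Infinite V] (G : SimpleGraph V) (hprime : PrimeGraph G)
    (hclique : ¬ ∃ S : Set V, S.Infinite ∧ G.IsClique S)
    (h013 : ¬ (Nonempty (G0 ↪g G) ∨ Nonempty (G1 ↪g G) ∨ Nonempty (G3 ↪g G)))
    (h2 : ¬ Nonempty (G2 ↪g G)) (K : Finset V) (hK : {w | ∀ k ∈ K, G.Adj k w}.Infinite) :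
    ∃ x, (∀ k ∈ K, G.Adj k x) ∧ {w | (∀ k ∈ K, G.Adj k w) ∧ G.Adj x w}.Infinite := by
  by_contra hcon
  push Not at hcon
  set W := {w | ∀ k ∈ K, G.Adj k w} with hW
  have : Infinite W := hK.to_subtype
  let H := G.induce W
  have hlf : ∀ v, (H.neighborSet v).Finite := by
    intro v
    have := hcon v v.2
    refine Set.Finite.of_finite_image (f := Subtype.val) (this.subset ?_)
      Subtype.val_injective.injOn
    rintro _ ⟨w, hw, rfl⟩
    exact ⟨w.2, hw⟩
  have hcomp : ∀ r, {w | H.Reachable r w}.Finite := by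
    intro r
    by_contra hr
    obtain ⟨e⟩ := konig_ray H hlf r hr
    exact h2 ⟨e.trans (SimpleGraph.Embedding.induce W)⟩
  have hT : {w | (∀ k ∈ K, G.Adj k w) ∧ ∀ v, (∀ k ∈ K, G.Adj k v) → ¬ G.Adj v w}.Finite := by
    by_contra hT
    exact h013 (isolated_case G hprime hclique K hT)
  have hT' : {w : W | ∀ v : W, ¬ H.Adj v w}.Finite := by
    refine Set.Finite.of_finite_image (f := Subtype.val) (hT.subset ?_)
      Subtype.val_injective.injOn
    rintro _ ⟨w, hw, rfl⟩
    exact ⟨w.2, fun v hv => hw ⟨v, hv⟩⟩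
  obtain ⟨f, hf, hfr⟩ := exists_seq_of_forall_finset_exists (fun w : W => ∃ v, H.Adj v w)
    (fun w w' => ¬ H.Reachable w w') (by
      intro s _
      have hfin : ({w : W | ∀ v : W, ¬ H.Adj v w} ∪ ⋃ x ∈ s, {w | H.Reachable x w}).Finite :=
        hT'.union (s.finite_toSet.biUnion fun x _ => hcomp x)
      obtain ⟨y, hy⟩ := hfin.exists_notMem
      simp only [Set.mem_union, Set.mem_iUnion, Set.mem_ofPred_eq, not_or, not_exists] at hy
      refine ⟨y, ?_, fun x hx => hy.2 x hx⟩
      by_contra h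
      exact hy.1 (by simpa using h))
  have key : ∀ i, ∃ (p q : W) (d : V), H.Reachable (f i) p ∧ H.Reachable (f i) q ∧ H.Adj p q ∧
      G.Adj d p ∧ ¬ G.Adj d q ∧ ∃ k ∈ K, ¬ G.Adj k d := by
    intro i
    obtain ⟨v, hv⟩ := hf i
    obtain ⟨d, hdC, _, ⟨x, hx, rfl⟩, _, ⟨y, hy, rfl⟩, hdx, hdy⟩ := exists_splitter G hprime
      (Set.image Subtype.val {w | H.Reachable (f i) w}) ((hcomp _).image _) v (f i)
      ⟨v, hv.symm.reachable, rfl⟩ ⟨f i, SimpleGraph.Reachable.refl _, rfl⟩ (G.ne_of_adj hv)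
    have hedge : ∃ p q : W, H.Reachable (f i) p ∧ H.Adj p q ∧ G.Adj d p ∧ ¬ G.Adj d q := by
      by_contra hno
      have hxy : H.Reachable x y := hx.symm.trans hy
      obtain ⟨w⟩ := hxy
      clear hy
      induction w with
      | nil => exact hdy hdx
      | @cons u v' w' hadj _ ih =>
        have hdv : G.Adj d v' := by
          by_contra h
          exact hno ⟨u, v', hx, hadj, hdx, h⟩
        exact ih (hx.trans hadj.reachable) hdv hdy
    obtain ⟨p, q, hp, hpq, hdp, hdq⟩ := hedge
    refine ⟨p, q, d, hp, hp.trans hpq.reachable, hpq, hdp, hdq, ?_⟩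
    by_contra hk
    push Not at hk
    apply hdC
    refine ⟨⟨d, hk⟩, ?_, rfl⟩
    have : H.Adj p ⟨d, hk⟩ := hdp.symm
    exact hp.trans this.reachable
  choose p q d hp hq hpq hdp hdq hdK using key
  have hne : ∀ i j, H.Reachable (f i) (f j) → i = j := by
    intro i j h
    rcases lt_trichotomy i j with hl | hl | hl
    · exact absurd h (hfr _ _ hl)
    · exact hl
    · exact absurd h.symm (hfr _ _ hl)
  apply h013
  refine edge_case G hclique K (fun i => (p i : V)) (fun i => (q i : V)) d (fun i => (p i).2)
    (fun i => (q i).2) hdK ?_ ?_ ?_ hdp hdq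
  · intro i j h
    have h' : H.Adj (p i) (p j) := h
    have := hne i j ((hp i).trans (h'.reachable.trans (hp j).symm))
    subst this
    exact G.loopless.irrefl _ h
  · intro i j h
    have h' : H.Adj (q i) (q j) := h
    have := hne i j ((hq i).trans (h'.reachable.trans (hq j).symm))
    subst this
    exact G.loopless.irrefl _ h
  · intro i j
    constructor
    · intro h
      have h' : H.Adj (p i) (q j) := h
      exact hne i j ((hp i).trans (h'.reachable.trans (hq j).symm))
    · rintro rfl
      exact hpq i

/-- Every infinite prime graph with no infinite clique contains an induced
subgraph isomorphic to one of `G0`, `G1`, `G2`, `G3`. -/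
theorem infinite_prime_graph_embeds {V : Type*} [Infinite V] (G : SimpleGraph V)
    (hprime : PrimeGraph G)
    (hclique : ¬ ∃ S : Set V, S.Infinite ∧ G.IsClique S) :
    Nonempty (G0 ↪g G) ∨ Nonempty (G1 ↪g G) ∨ Nonempty (G2 ↪g G) ∨ Nonempty (G3 ↪g G) := by
  classical
  by_contra hnone
  push Not at hnone
  obtain ⟨h0, h1, h2, h3⟩ := hnone
  have h013 : ¬ (Nonempty (G0 ↪g G) ∨ Nonempty (G1 ↪g G) ∨ Nonempty (G3 ↪g G)) := by
    rintro (h | h | h)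
    · exact not_nonempty_iff.2 h0 h
    · exact not_nonempty_iff.2 h1 h
    · exact not_nonempty_iff.2 h3 h
  have h2' : ¬ Nonempty (G2 ↪g G) := not_nonempty_iff.2 h2
  have hstep : ∀ K : {K : Finset V // {w | ∀ k ∈ K, G.Adj k w}.Infinite},
      ∃ x, (∀ k ∈ K.1, G.Adj k x) ∧ {w | ∀ k ∈ insert x K.1, G.Adj k w}.Infinite := by
    rintro ⟨K, hK⟩
    obtain ⟨x, hx, hinf⟩ := clique_step G hprime hclique h013 h2' K hK
    refine ⟨x, hx, hinf.mono ?_⟩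
    rintro w ⟨hw, hxw⟩ k hk
    rcases Finset.mem_insert.1 hk with rfl | hk
    · exact hxw
    · exact hw k hk
  choose X hX1 hX2 using hstep
  let s : ℕ → {K : Finset V // {w | ∀ k ∈ K, G.Adj k w}.Infinite} := fun n =>
    Nat.rec ⟨∅, by simpa using Set.infinite_univ⟩ (fun _ K => ⟨insert (X K) K.1, hX2 K⟩) n
  have hs : ∀ n, (s (n+1)).1 = insert (X (s n)) (s n).1 := fun n => rfl
  have hmem : ∀ m n, m < n → X (s m) ∈ (s n).1 := by
    intro m n hmn
    induction n with
    | zero => omega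
    | succ n ih =>
      rw [hs, Finset.mem_insert]
      rcases Nat.lt_succ_iff_lt_or_eq.1 hmn with h | rfl
      · exact Or.inr (ih h)
      · exact Or.inl rfl
  have hadj : ∀ m n, m ≠ n → G.Adj (X (s m)) (X (s n)) := by
    intro m n hmn
    rcases lt_or_gt_of_ne hmn with h | h
    · exact hX1 _ _ (hmem m n h)
    · exact (hX1 _ _ (hmem n m h)).symm
  apply hclique
  refine ⟨Set.range (fun i => X (s i)), Set.infinite_range_of_injective ?_, ?_⟩
  · intro i j hij
    by_contra hne
    exact (hadj i j hne).ne hij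
  · rintro _ ⟨i, rfl⟩ _ ⟨j, rfl⟩ hne
    exact hadj i j (fun h => hne (by rw [h]))
end

section
/- Every infinite prime poset with no infinite antichain contains an induced subposet whose comparability graph is isomorphic to the complement of G1 or to the complement of G2 (equivalently, it embeds one of the four transitive orientations of these two complement graphs). -/
set_option autoImplicit false

/-- A subset `A` of a poset is autonomous if every element outside `A`
compares in the same way to all elements of `A`. -/
def PosetAutonomous {α : Type*} (P : PartialOrder α) (A : Set α) : Prop :=
  ∀ v ∉ A, ∀ a ∈ A, ∀ a' ∈ A, (P.lt v a → P.lt v a') ∧ (P.lt a v → P.lt a' v)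

/-- A poset is prime if it has more than three elements and its only
autonomous sets are the trivial ones. -/
def PosetPrime {α : Type*} (P : PartialOrder α) : Prop :=
  3 < Cardinal.mk α ∧
    ∀ A : Set α, PosetAutonomous P A → A = ∅ ∨ (∃ x, A = {x}) ∨ A = Set.univ

/-- The comparability graph of a poset: distinct comparable elements are adjacent. -/
def compGraph {α : Type*} (P : PartialOrder α) : SimpleGraph α :=
  SimpleGraph.fromRel (fun x y => P.le x y)


section Helpers

/-- incomparability -/
def Inc {α : Type*} [PartialOrder α] (x y : α) : Prop := ¬ x ≤ y ∧ ¬ y ≤ x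

theorem Inc.symm' {α : Type*} [PartialOrder α] {x y : α} (h : Inc x y) : Inc y x := ⟨h.2, h.1⟩

/-- the incomparability graph on a subset -/
def incOn {α : Type*} [PartialOrder α] (N : Set α) : SimpleGraph N where
  Adj u v := Inc (u : α) v
  symm := ⟨fun _ _ h => h.symm'⟩
  loopless := ⟨fun _ h => h.1 le_rfl⟩

/-- the half graph pattern in the incomparability graph -/
def HalfPattern (α : Type*) [PartialOrder α] : Prop :=
  ∃ a b : ℕ → α, (∀ i j, ¬ Inc (a i) (a j)) ∧ (∀ i j, ¬ Inc (b i) (b j)) ∧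
    ∀ i j, Inc (a i) (b j) ↔ i < j

/-- no sequence of pairwise incomparable elements -/
def NoAnti (α : Type*) [PartialOrder α] : Prop :=
  ¬ ∃ f : ℕ → α, ∀ m n, m < n → Inc (f m) (f n)

/-- the complement of `N` is witnessed by elements incomparable to `N` -/
def Witnessed {α : Type*} [PartialOrder α] (N : Set α) : Prop :=
  ∀ y ∉ N, ∃ x, (∀ v ∈ N, Inc x v) ∧ (y ≤ x ∨ x ≤ y)

theorem mono_subseq {α : Type*} [PartialOrder α] (h : NoAnti α) (f : ℕ → α) :
    ∃ g : ℕ ↪o ℕ, (∀ m n, m < n → f (g m) ≤ f (g n)) ∨ (∀ m n, m < n → f (g n) ≤ f (g m)) := by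
  obtain ⟨g, hg | hg⟩ := exists_increasing_or_nonincreasing_subseq (fun a b : α => a ≤ b) f
  · exact ⟨g, Or.inl hg⟩
  obtain ⟨g', hg' | hg'⟩ :=
    exists_increasing_or_nonincreasing_subseq (fun a b : α => b ≤ a) (f ∘ g)
  · exact ⟨g'.trans g, Or.inr hg'⟩
  · exact absurd ⟨fun n => f (g (g' n)), fun m n hmn =>
      ⟨hg _ _ (g'.strictMono hmn), hg' m n hmn⟩⟩ h

theorem chain_subseq {α : Type*} [PartialOrder α] (h : NoAnti α) (f : ℕ → α) :
    ∃ g : ℕ ↪o ℕ, ∀ m n, ¬ Inc (f (g m)) (f (g n)) := by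
  obtain ⟨g, hg | hg⟩ := mono_subseq h f
  all_goals
    refine ⟨g, fun m n hI => ?_⟩
    rcases lt_trichotomy m n with h1 | h1 | h1
    · first | exact hI.1 (hg _ _ h1) | exact hI.2 (hg _ _ h1)
    · subst h1; exact hI.1 le_rfl
    · first | exact hI.2 (hg _ _ h1) | exact hI.1 (hg _ _ h1)

section Comp
variable {α : Type*} [PartialOrder α] {N : Set α}

theorem lt_of_reach_right {u v v' : N} (hn : ¬ (incOn N).Reachable u v) (h : (u : α) < v)
    (hr : (incOn N).Reachable v v') : (u : α) < v' := by
  rw [SimpleGraph.reachable_iff_reflTransGen] at hr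
  induction hr with
  | refl => exact h
  | @tail w w' h1 h2 ih =>
    have hw : ¬ (incOn N).Reachable u w' := fun hh => hn (hh.trans
      (((SimpleGraph.reachable_iff_reflTransGen _ _).2 h1).trans h2.reachable).symm)
    have h2' : Inc (w : α) w' := h2
    have hna : ¬ Inc (u : α) w' := fun hI =>
      hw (SimpleGraph.Adj.reachable (G := incOn N) hI)
    by_cases hle : (u : α) ≤ w'
    · refine lt_of_le_of_ne hle fun he => hw ?_
      rw [Subtype.ext he]
    · by_cases hle' : (w' : α) ≤ u
      · exact absurd (hle'.trans ih.le) h2'.2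
      · exact absurd ⟨hle, hle'⟩ hna

theorem lt_of_reach_left {u v u' : N} (hn : ¬ (incOn N).Reachable u v) (h : (u : α) < v)
    (hr : (incOn N).Reachable u u') : (u' : α) < v := by
  rw [SimpleGraph.reachable_iff_reflTransGen] at hr
  induction hr with
  | refl => exact h
  | @tail w w' h1 h2 ih =>
    have hw : ¬ (incOn N).Reachable w' v := fun hh => hn
      ((((SimpleGraph.reachable_iff_reflTransGen _ _).2 h1).trans h2.reachable).trans hh)
    have h2' : Inc (w : α) w' := h2
    have hna : ¬ Inc (w' : α) v := fun hI =>
      hw (SimpleGraph.Adj.reachable (G := incOn N) hI)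
    by_cases hle : (w' : α) ≤ v
    · refine lt_of_le_of_ne hle fun he => hw ?_
      rw [Subtype.ext he]
    · by_cases hle' : (v : α) ≤ w'
      · exact absurd (ih.le.trans hle') h2'.1
      · exact absurd ⟨hle, hle'⟩ hna

/-- weak order between components -/
def Pre (u v : N) : Prop := (incOn N).Reachable u v ∨ (u : α) < v
/-- strict order between components -/
def Sl (u v : N) : Prop := ¬ (incOn N).Reachable u v ∧ (u : α) < v

theorem sl_of_not_pre {u v : N} (h : ¬ Pre u v) : Sl v u := by
  unfold Pre at h
  push Not at h
  refine ⟨fun hh => h.1 hh.symm, ?_⟩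
  have hna : ¬ Inc (u : α) v := fun hI => h.1 (SimpleGraph.Adj.reachable (G := incOn N) hI)
  have hne : (u : α) ≠ v := fun he => h.1 (by rw [Subtype.ext he])
  by_contra hc
  exact hna ⟨fun hle => h.2 (lt_of_le_of_ne hle hne),
    fun hle => hc (lt_of_le_of_ne hle hne.symm)⟩

theorem Sl.trans_pre {u v w : N} (h : Sl u v) (h' : Pre v w) : Sl u w := by
  by_cases hr : (incOn N).Reachable v w
  · exact ⟨fun hh => h.1 (hh.trans hr.symm), lt_of_reach_right h.1 h.2 hr⟩
  · rcases h' with h' | h'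
    · exact absurd h' hr
    · exact ⟨fun hh => lt_asymm h.2 (lt_of_reach_right hr h' hh.symm), h.2.trans h'⟩

theorem Sl.pre_trans {u v w : N} (h' : Pre u v) (h : Sl v w) : Sl u w := by
  by_cases hr : (incOn N).Reachable u v
  · exact ⟨fun hh => h.1 (hr.symm.trans hh), lt_of_reach_left h.1 h.2 hr.symm⟩
  · rcases h' with h' | h'
    · exact absurd h' hr
    · exact ⟨fun hh => lt_asymm h.2 (lt_of_reach_left hr h' hh), h'.trans h.2⟩

/-- the block of components between two given ones -/
def Blk (r s : N) : Set α := {v | ∃ hv : v ∈ N, Pre r ⟨v, hv⟩ ∧ Pre ⟨v, hv⟩ s}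

theorem blk_split (hW : Witnessed N)
    (hP : ∀ A : Set α, PosetAutonomous ‹PartialOrder α› A →
      A = ∅ ∨ (∃ x, A = {x}) ∨ A = Set.univ)
    {r s t : N} (hrs : Sl r s) (hst : Sl s t) :
    ∃ y p q, p ∈ Blk r s ∧ q ∈ Blk r s ∧
      (((∀ v ∈ N, ¬ v ≤ y) ∧ y < p ∧ ¬ y ≤ q) ∨ ((∀ v ∈ N, ¬ y ≤ v) ∧ p < y ∧ ¬ q ≤ y)) := by
  have hr : (r : α) ∈ Blk r s := ⟨r.2, Or.inl (SimpleGraph.Reachable.refl _), Or.inr hrs.2⟩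
  have hs : (s : α) ∈ Blk r s := ⟨s.2, Or.inr hrs.2, Or.inl (SimpleGraph.Reachable.refl _)⟩
  have ht : (t : α) ∉ Blk r s := by
    rintro ⟨_, _, h⟩
    exact lt_irrefl _ (hst.trans_pre h).2
  have hna : ¬ PosetAutonomous ‹PartialOrder α› (Blk r s) := by
    intro hA
    rcases hP _ hA with h | ⟨x, h⟩ | h
    · rw [h] at hr; exact hr
    · rw [h] at hr hs
      exact hrs.2.ne (hr.trans hs.symm)
    · rw [h] at ht; exact ht trivial
  unfold PosetAutonomous at hna
  push Not at hna
  obtain ⟨y, hy, p, hp, q, hq, hs⟩ := hna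
  have hs' : (y < p ∧ ¬ y < q) ∨ (p < y ∧ ¬ q < y) := by
    by_cases h1 : y < p ∧ ¬ y < q
    · exact Or.inl h1
    · exact Or.inr (hs fun h => by_contra fun h' => h1 ⟨h, h'⟩)
  have hyN : y ∉ N := by
    intro hyN
    by_cases h1 : Pre r ⟨y, hyN⟩
    · by_cases h2 : Pre ⟨y, hyN⟩ s
      · exact hy ⟨hyN, h1, h2⟩
      · have := sl_of_not_pre h2
        obtain ⟨hpN, -, hp⟩ := hp
        obtain ⟨hqN, -, hq⟩ := hq
        have h3 : p < y := (this.pre_trans hp).2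
        have h4 : q < y := (this.pre_trans hq).2
        rcases hs' with h | h
        · exact lt_asymm h.1 h3
        · exact h.2 h4
    · have := sl_of_not_pre h1
      obtain ⟨hpN, hp, -⟩ := hp
      obtain ⟨hqN, hq, -⟩ := hq
      have h3 : y < p := (this.trans_pre hp).2
      have h4 : y < q := (this.trans_pre hq).2
      rcases hs' with h | h
      · exact h.2 h4
      · exact lt_asymm h.1 h3
  obtain ⟨x, hx, hxy⟩ := hW y hyN
  refine ⟨y, p, q, hp, hq, ?_⟩
  have hpN := hp.1
  have hqN := hq.1
  rcases hxy with hxy | hxy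
  · left
    have h0 : ∀ v ∈ N, ¬ v ≤ y := fun v hv h => (hx v hv).2 (h.trans hxy)
    refine ⟨h0, ?_⟩
    rcases hs' with h | h
    · exact ⟨h.1, fun hle => h.2 (lt_of_le_of_ne hle fun he => h0 q hqN he.ge)⟩
    · exact absurd h.1.le (h0 p hpN)
  · right
    have h0 : ∀ v ∈ N, ¬ y ≤ v := fun v hv h => (hx v hv).1 (hxy.trans h)
    refine ⟨h0, ?_⟩
    rcases hs' with h | h
    · exact absurd h.1.le (h0 p hpN)
    · exact ⟨h.1, fun hle => h.2 (lt_of_le_of_ne hle fun he => h0 q hqN he.ge)⟩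

theorem infinite_subseq (Q R : ℕ → Prop) (h : ∀ n, Q n ∨ R n) :
    ∃ g : ℕ → ℕ, StrictMono g ∧ ((∀ n, Q (g n)) ∨ (∀ n, R (g n))) := by
  by_cases hQ : ∃ᶠ n in Filter.atTop, Q n
  · obtain ⟨g, hg, hg'⟩ := Filter.extraction_of_frequently_atTop hQ
    exact ⟨g, hg, Or.inl hg'⟩
  · have : ∀ᶠ n in Filter.atTop, R n := by
      rw [Filter.not_frequently] at hQ
      exact hQ.mono fun n hn => (h n).resolve_left hn
    obtain ⟨g, hg, hg'⟩ := Filter.extraction_of_frequently_atTop this.frequently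
    exact ⟨g, hg, Or.inr hg'⟩

theorem half_of_increasing (hA : NoAnti α) (hW : Witnessed N)
    (hP : ∀ A : Set α, PosetAutonomous ‹PartialOrder α› A →
      A = ∅ ∨ (∃ x, A = {x}) ∨ A = Set.univ)
    (r : ℕ → N) (hr : ∀ i j, i < j → Sl (r i) (r j)) : HalfPattern α := by
  have key := fun i : ℕ => blk_split hW hP (hr (2*i) (2*i+1) (by omega))
    (hr (2*i+1) (2*i+2) (by omega))
  choose y p q hp hq hy using key
  have blk : ∀ i j, i < j → ∀ u ∈ Blk (r (2*i)) (r (2*i+1)),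
      ∀ v ∈ Blk (r (2*j)) (r (2*j+1)), u < v := by
    rintro i j hij u ⟨hu, -, hu'⟩ v ⟨hv, hv', -⟩
    exact (((hr (2*i+1) (2*j) (by omega)).pre_trans hu').trans_pre hv').2
  obtain ⟨g, hg, hcase⟩ := infinite_subseq _ _ hy
  obtain ⟨g', hg'⟩ := chain_subseq hA (fun n => y (g n))
  set e : ℕ → ℕ := fun n => g (g' n) with he
  have hem : StrictMono e := hg.comp g'.strictMono
  have hpc : ∀ i j, i < j → p (e i) < p (e j) := fun i j hij =>
    blk _ _ (hem hij) _ (hp _) _ (hp _)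
  have hpI : ∀ i j, ¬ Inc (p (e i)) (p (e j)) := by
    intro i j hI
    rcases lt_trichotomy i j with h1 | h1 | h1
    · exact hI.1 (hpc _ _ h1).le
    · subst h1; exact hI.1 le_rfl
    · exact hI.2 (hpc _ _ h1).le
  have hpm : ∀ i j, i ≤ j → p (e i) ≤ p (e j) := by
    intro i j hij
    rcases hij.eq_or_lt with h | h
    · rw [h]
    · exact (hpc _ _ h).le
  rcases hcase with hc | hc
  · refine ⟨fun n => p (e n), fun n => y (e n), hpI, hg', fun i j => ?_⟩
    obtain ⟨h1, h2, h3⟩ := hc (g' j)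
    constructor
    · intro hI
      by_contra hlt
      exact hI.2 (h2.le.trans (hpm j i (by omega)))
    · intro hij
      exact ⟨h1 _ (hp _).1, fun hle => h3 (hle.trans (blk _ _ (hem hij) _ (hp _) _ (hq _)).le)⟩
  · refine ⟨fun n => y (e n), fun n => p (e n), hg', hpI, fun i j => ?_⟩
    obtain ⟨h1, h2, h3⟩ := hc (g' i)
    constructor
    · intro hI
      by_contra hlt
      exact hI.2 ((hpm j i (by omega)).trans h2.le)
    · intro hij
      exact ⟨h1 _ (hp _).1, fun hle => h3 ((blk _ _ (hem hij) _ (hq _) _ (hp _)).le.trans hle)⟩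

end Comp

theorem half_of_infinite_comps {α : Type*} [PartialOrder α] {N : Set α} (hA : NoAnti α)
    (hW : Witnessed N)
    (hP : ∀ A : Set α, PosetAutonomous ‹PartialOrder α› A →
      A = ∅ ∨ (∃ x, A = {x}) ∨ A = Set.univ)
    (hinf : Infinite (incOn N).ConnectedComponent) : HalfPattern α := by
  let c := Infinite.natEmbedding (incOn N).ConnectedComponent
  let r : ℕ → N := fun n => (c n).out
  have hr : ∀ i j, i ≠ j → ¬ (incOn N).Reachable (r i) (r j) := by
    intro i j hij h
    apply hij
    apply c.injective
    have := SimpleGraph.ConnectedComponent.sound h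
    have e : ∀ k, (incOn N).connectedComponentMk (r k) = c k := fun k => Quot.out_eq (c k)
    rwa [e, e] at this
  have hne : ∀ i j, i ≠ j → (r i : α) ≠ r j := by
    intro i j hij h
    apply hr i j hij
    rw [Subtype.ext h]
  obtain ⟨g, hg | hg⟩ := mono_subseq hA (fun n => (r n : α))
  · refine half_of_increasing hA hW hP (fun n => r (g n)) fun i j hij => ?_
    have : g i ≠ g j := fun h => hij.ne (g.injective h)
    exact ⟨hr _ _ this, lt_of_le_of_ne (hg i j hij) (hne _ _ this)⟩
  · have hdual : ∀ u v : α, Inc (α := αᵒᵈ) (OrderDual.toDual u) (OrderDual.toDual v) ↔ Inc u v :=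
      fun u v => ⟨fun h => ⟨h.2, h.1⟩, fun h => ⟨h.2, h.1⟩⟩
    have hG : ∀ u v : N, (incOn (α := αᵒᵈ) N).Reachable u v → (incOn N).Reachable u v := by
      intro u v h
      exact h.mono (fun a b hab => (hdual a b).1 hab)
    have hA' : NoAnti αᵒᵈ := by
      rintro ⟨f, hf⟩
      exact hA ⟨f, fun m n hmn => (hdual _ _).1 (hf m n hmn)⟩
    have hW' : Witnessed (α := αᵒᵈ) N := by
      intro y hy
      obtain ⟨x, h1, h2⟩ := hW y hy
      exact ⟨x, fun v hv => (hdual _ _).2 (h1 v hv), h2.symm⟩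
    have hP' : ∀ A : Set αᵒᵈ, PosetAutonomous inferInstance A →
        A = ∅ ∨ (∃ x, A = {x}) ∨ A = Set.univ := by
      intro A hAA
      exact hP A fun v hv a ha a' ha' => ⟨(hAA v hv a ha a' ha').2, (hAA v hv a ha a' ha').1⟩
    obtain ⟨a, b, h1, h2, h3⟩ : HalfPattern αᵒᵈ := by
      refine half_of_increasing (N := N) hA' hW' hP' (fun n => r (g n)) fun i j hij => ?_
      have : g i ≠ g j := fun h => hij.ne (g.injective h)
      exact ⟨fun h => hr _ _ this (hG _ _ h),
        lt_of_le_of_ne (α := αᵒᵈ) (hg i j hij) (hne _ _ this)⟩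
    exact ⟨a, b, fun i j h => h1 i j ((hdual _ _).2 h), fun i j h => h2 i j ((hdual _ _).2 h),
      fun i j => (hdual _ _).symm.trans (h3 i j)⟩

/-- König: a locally finite graph with an infinite component has an induced ray. -/
theorem exists_ray {V : Type*} (G : SimpleGraph V) (r : V) (hinf : {w | G.Reachable r w}.Infinite)
    (hfin : ∀ v, {w | G.Adj v w}.Finite) :
    ∃ f : ℕ → V, Function.Injective f ∧ ∀ i j, G.Adj (f i) (f j) ↔ (i + 1 = j ∨ j + 1 = i) := by
  let D : V → Set V := fun v => {w | G.Reachable v w ∧ G.dist r w = G.dist r v + G.dist v w}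
  let S := {v : V // G.Reachable r v ∧ (D v).Infinite}
  have step : ∀ v : S, ∃ u : S, G.Adj v.1 u.1 ∧ G.dist r u.1 = G.dist r v.1 + 1 := by
    rintro ⟨v, hv, hD⟩
    have hsub : D v \ {v} ⊆ ⋃ u ∈ {u | G.Adj v u},
        {w | w ∈ D u ∧ G.dist r u = G.dist r v + 1} := by
      rintro w ⟨⟨hw1, hw2⟩, hwv⟩
      obtain ⟨pw, hpw⟩ := hw1.exists_walk_length_eq_dist
      cases pw with
      | nil => exact absurd rfl hwv
      | @cons _ u _ hadj p' =>
        simp only [SimpleGraph.Walk.length_cons] at hpw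
        simp only [Set.mem_iUnion]
        refine ⟨u, hadj, ?_⟩
        have hru : G.Reachable r u := hv.trans hadj.reachable
        have h1 : G.dist u w ≤ p'.length := SimpleGraph.dist_le p'
        obtain ⟨q1, hq1⟩ := hv.exists_walk_length_eq_dist
        obtain ⟨q2, hq2⟩ := hru.exists_walk_length_eq_dist
        obtain ⟨q3, hq3⟩ := p'.reachable.exists_walk_length_eq_dist
        have h2 : G.dist r u ≤ G.dist r v + 1 := by
          have := SimpleGraph.dist_le (q1.concat hadj)
          rw [SimpleGraph.Walk.length_concat] at this
          omega
        have h3 : G.dist r w ≤ G.dist r u + G.dist u w := by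
          have := SimpleGraph.dist_le (q2.append q3)
          rw [SimpleGraph.Walk.length_append] at this
          omega
        refine ⟨⟨p'.reachable, ?_⟩, ?_⟩ <;> omega
    have hinf' : (⋃ u ∈ {u | G.Adj v u},
        {w | w ∈ D u ∧ G.dist r u = G.dist r v + 1}).Infinite :=
      (hD.sdiff (Set.finite_singleton v)).mono hsub
    by_contra hcon
    apply hinf'
    refine Set.Finite.biUnion (hfin v) fun u hu => ?_
    by_contra hu'
    have hu' : {w | w ∈ D u ∧ G.dist r u = G.dist r v + 1}.Infinite := hu'
    obtain ⟨w, -, hw⟩ := hu'.nonempty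
    exact hcon ⟨⟨u, hv.trans (SimpleGraph.Adj.reachable hu), hu'.mono fun w hw => hw.1⟩, hu, hw⟩
  choose nxt hn1 hn2 using step
  have hr0 : (D r).Infinite := hinf.mono fun w hw => ⟨hw, by simp⟩
  let f : ℕ → S := fun n => Nat.rec ⟨r, SimpleGraph.Reachable.refl _, hr0⟩ (fun _ s => nxt s) n
  have hf : ∀ n, f (n+1) = nxt (f n) := fun n => rfl
  have hd : ∀ n, G.dist r (f n).1 = n := by
    intro n
    induction n with
    | zero => simp [f]
    | succ k ih => rw [hf, hn2, ih]
  have hle : ∀ i j, G.Adj (f i).1 (f j).1 → j ≤ i + 1 := by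
    intro i j h
    obtain ⟨q1, hq1⟩ := (f i).2.1.exists_walk_length_eq_dist
    have := SimpleGraph.dist_le (q1.concat h)
    rw [SimpleGraph.Walk.length_concat, hq1, hd, hd] at this
    exact this
  refine ⟨fun n => (f n).1, fun i j hij => ?_, fun i j => ⟨fun h => ?_, ?_⟩⟩
  · have := congrArg (G.dist r) hij
    simpa only [hd] using this
  · have h1 := hle i j h
    have h2 := hle j i h.symm
    have h3 : i ≠ j := by rintro rfl; exact h.ne rfl
    omega
  · rintro (rfl | rfl)
    · exact hn1 (f i)
    · exact (hn1 (f j)).symm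

theorem main_alt {α : Type*} [PartialOrder α] [Infinite α] (hA : NoAnti α)
    (hP : ∀ A : Set α, PosetAutonomous ‹PartialOrder α› A →
      A = ∅ ∨ (∃ x, A = {x}) ∨ A = Set.univ) :
    HalfPattern α ∨ ∃ f : ℕ → α, Function.Injective f ∧
      ∀ i j, Inc (f i) (f j) ↔ (i + 1 = j ∨ j + 1 = i) := by
  by_contra hcon
  push Not at hcon
  obtain ⟨hnh, hnp⟩ := hcon
  have step : ∀ N : {N : Set α // N.Infinite ∧ Witnessed N},
      ∃ x ∈ N.1, (N.1 ∩ {v | Inc x v}).Infinite := by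
    rintro ⟨N, hN, hW⟩
    by_contra hc
    push Not at hc
    have hfin : Finite (incOn N).ConnectedComponent := by
      by_contra h
      exact hnh (half_of_infinite_comps hA hW hP (not_finite_iff_infinite.1 h))
    have := hN.to_subtype
    obtain ⟨c, hc'⟩ := Finite.exists_infinite_fiber (incOn N).connectedComponentMk
    have hcinf : ((incOn N).connectedComponentMk ⁻¹' {c}).Infinite :=
      Set.infinite_coe_iff.1 hc'
    obtain ⟨r, hr⟩ := hcinf.nonempty
    obtain ⟨f, hf1, hf2⟩ := exists_ray (incOn N) r
      (hcinf.mono fun w hw => by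
        simp only [Set.mem_preimage, Set.mem_singleton_iff] at hw hr
        exact SimpleGraph.ConnectedComponent.exact (hr.trans hw.symm))
      (fun v => by
        have h1 := hc v v.2
        have h1 : (N ∩ {w | Inc (v : α) w}).Finite := by
          simpa using h1
        refine Set.Finite.of_finite_image (f := Subtype.val) (h1.subset ?_)
          Subtype.val_injective.injOn
        rintro _ ⟨w, hw, rfl⟩
        exact ⟨w.2, hw⟩)
    obtain ⟨i, j, hij⟩ := hnp (fun n => f n) (Subtype.val_injective.comp hf1)
    have h3 : Inc (f i : α) (f j) ↔ _ := hf2 i j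
    rw [h3] at hij
    tauto
  choose x hx hxi using step
  let nxt : {N : Set α // N.Infinite ∧ Witnessed N} → {N : Set α // N.Infinite ∧ Witnessed N} :=
    fun N => ⟨N.1 ∩ {v | Inc (x N) v}, hxi N, by
      intro y hy
      by_cases hyN : y ∈ N.1
      · refine ⟨x N, fun v hv => hv.2, ?_⟩
        by_contra hc
        push Not at hc
        exact hy ⟨hyN, hc.2, hc.1⟩
      · obtain ⟨z, hz1, hz2⟩ := N.2.2 y hyN
        exact ⟨z, fun v hv => hz1 v hv.1, hz2⟩⟩
  let S : ℕ → {N : Set α // N.Infinite ∧ Witnessed N} := fun n =>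
    Nat.rec ⟨Set.univ, Set.infinite_univ, fun y hy => absurd trivial hy⟩ (fun _ s => nxt s) n
  have hS : ∀ n, S (n+1) = nxt (S n) := fun n => rfl
  have hanti : Antitone fun n => (S n).1 := antitone_nat_of_succ_le fun n => by
    rw [hS]; exact Set.inter_subset_left
  apply hA
  refine ⟨fun n => x (S n), fun m n hmn => ?_⟩
  have h1 : x (S n) ∈ (S (m+1)).1 := hanti (Nat.succ_le_of_lt hmn) (hx (S n))
  rw [hS] at h1
  exact h1.2

theorem compGraph_adj {α : Type*} [P : PartialOrder α] (u v : α) :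
    (compGraph P).Adj u v ↔ u ≠ v ∧ ¬ Inc u v := by
  unfold compGraph Inc
  rw [SimpleGraph.fromRel_adj]
  tauto

theorem embed_compl {α : Type*} [P : PartialOrder α] (G : SimpleGraph (ℕ ⊕ ℕ)) (f : ℕ ⊕ ℕ → α)
    (hf : Function.Injective f) (h : ∀ u v, Inc (f u) (f v) ↔ G.Adj u v) :
    Nonempty (Gᶜ ↪g compGraph P) := by
  refine ⟨⟨⟨f, hf⟩, ?_⟩⟩
  intro u v
  simp only [Function.Embedding.coeFn_mk]
  rw [compGraph_adj, SimpleGraph.compl_adj, h, hf.ne_iff]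

end Helpers

/-- Every infinite prime poset with no infinite antichain contains an induced
subposet whose comparability graph is isomorphic to the complement of `G1` or
the complement of `G2`. -/
theorem infinite_prime_poset_no_infinite_antichain {α : Type*} [Infinite α]
    (P : PartialOrder α) (hprime : PosetPrime P)
    (hanti : ¬ ∃ S : Set α, S.Infinite ∧ IsAntichain P.le S) :
    Nonempty (G1ᶜ ↪g compGraph P) ∨ Nonempty (G2ᶜ ↪g compGraph P) := by
  have hA : NoAnti α := by
    rintro ⟨f, hf⟩
    have hne : ∀ m n, m ≠ n → Inc (f m) (f n) := by
      intro m n hmn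
      rcases lt_or_gt_of_ne hmn with h | h
      · exact hf _ _ h
      · exact (hf _ _ h).symm'
    have hinj : Function.Injective f := by
      intro m n h
      by_contra hmn
      exact (hne m n hmn).1 h.le
    refine hanti ⟨Set.range f, Set.infinite_range_of_injective hinj, ?_⟩
    rintro _ ⟨m, rfl⟩ _ ⟨n, rfl⟩ hmn
    exact (hne m n fun h => hmn (by rw [h])).1
  rcases main_alt hA hprime.2 with ⟨a, b, ha, hb, hab⟩ | ⟨f, hf, hadj⟩
  · left
    have hab' : ∀ i j, Inc (b j) (a i) ↔ i < j := fun i j =>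
      ⟨fun h => (hab i j).1 h.symm', fun h => ((hab i j).2 h).symm'⟩
    refine embed_compl G1 (Sum.elim a b) ?_ ?_
    · have e1 : ∀ i i', a i = a i' → i ≤ i' := by
        intro i i' h
        by_contra hc
        have h1 := (hab i' i).2 (by omega)
        rw [← h, hab] at h1
        omega
      have e2 : ∀ i i', b i = b i' → i ≤ i' := by
        intro i i' h
        by_contra hc
        have h1 := (hab i' i).2 (by omega)
        rw [h, hab] at h1
        omega
      have e3 : ∀ i j, a i ≠ b j := by
        intro i j h
        have h1 := (hab i (i+1)).2 (by omega)
        rw [h] at h1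
        exact hb _ _ h1
      rintro (i | i) (j | j) h
      · rw [le_antisymm (e1 _ _ h) (e1 _ _ h.symm)]
      · exact absurd h (e3 _ _)
      · exact absurd h.symm (e3 _ _)
      · rw [le_antisymm (e2 _ _ h) (e2 _ _ h.symm)]
    · rintro (i | i) (j | j) <;> simp [G1, ha, hb, hab, hab']
  · right
    refine embed_compl G2 (Sum.elim (fun i => f (2*i+1)) (fun j => f (2*j))) ?_ ?_
    · rintro (i | i) (j | j) h <;> have h := hf h
      · congr 1; omega
      · omega
      · omega
      · congr 1; omega
    · rintro (i | i) (j | j) <;> simp [G2, hadj] <;> omega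
end

section
/- Let G be an infinite prime graph. If every chain in the neighborhood lattice N̂(G) is finite, then G contains an induced subgraph isomorphic to G2 or to G3. -/
set_option autoImplicit false

/-- The neighborhood lattice of a graph: all intersections of neighborhoods
(the whole vertex set being the empty intersection), ordered by inclusion. -/
def nhdLattice {V : Type*} (G : SimpleGraph V) : Set (Set V) :=
  {X | ∃ S : Set V, X = ⋂ x ∈ S, G.neighborSet x}

/-- Greedy selection of a sequence in an infinite set. -/
theorem greedy_seq {α : Type*} (J : Set α) (hJ : J.Infinite) (P : α → α → Prop)
    (h : ∀ i ∈ J, {j ∈ J | ¬ P i j}.Finite) :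
    ∃ f : ℕ → α, (∀ n, f n ∈ J) ∧ ∀ m n, m < n → P (f m) (f n) := by
  classical
  apply exists_seq_of_forall_finset_exists (· ∈ J) P
  intro s hs
  have hfin : (⋃ i ∈ s, {j ∈ J | ¬ P i j}).Finite :=
    Set.Finite.biUnion s.finite_toSet (fun i hi => h i (hs i hi))
  obtain ⟨y, hy, hy2⟩ := (hJ.sdiff hfin).nonempty
  refine ⟨y, hy, fun x hx => ?_⟩
  by_contra hc
  exact hy2 (Set.mem_biUnion (Finset.mem_coe.2 hx) ⟨hy, hc⟩)

theorem nhd_inter {V : Type*} {G : SimpleGraph V} {X : Set V} (hX : X ∈ nhdLattice G) (y : V) :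
    X ∩ G.neighborSet y ∈ nhdLattice G := by
  obtain ⟨S, rfl⟩ := hX
  refine ⟨insert y S, ?_⟩
  rw [Set.biInter_insert, Set.inter_comm]

theorem no_desc {V : Type*} {G : SimpleGraph V}
    (hchain : ∀ C : Set (Set V), C ⊆ nhdLattice G → IsChain (· ⊆ ·) C → C.Finite)
    (f : ℕ → Set V) (hf : ∀ n, f n ∈ nhdLattice G) (ha : StrictAnti f) : False := by
  have h1 : (Set.range f).Finite := by
    apply hchain
    · rintro _ ⟨n, rfl⟩
      exact hf n
    · rintro _ ⟨m, rfl⟩ _ ⟨n, rfl⟩ _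
      rcases le_total m n with h | h
      · exact Or.inr (ha.antitone h)
      · exact Or.inl (ha.antitone h)
  exact Set.infinite_range_of_injective ha.injective h1

theorem exists_min_nhd {V : Type*} {G : SimpleGraph V}
    (hchain : ∀ C : Set (Set V), C ⊆ nhdLattice G → IsChain (· ⊆ ·) C → C.Finite)
    (P : Set V → Prop) (X₀ : Set V) (h₀ : X₀ ∈ nhdLattice G) (hP : P X₀) :
    ∃ X ∈ nhdLattice G, P X ∧ ∀ Y ∈ nhdLattice G, P Y → ¬ Y ⊂ X := by
  by_contra hc
  push Not at hc
  have step : ∀ X : {X : Set V // X ∈ nhdLattice G ∧ P X},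
      ∃ Y : {X : Set V // X ∈ nhdLattice G ∧ P X}, Y.1 ⊂ X.1 := by
    rintro ⟨X, h1, h2⟩
    obtain ⟨Y, h3, h4, h5⟩ := hc X h1 h2
    exact ⟨⟨Y, h3, h4⟩, h5⟩
  choose g hg using step
  let f : ℕ → {X : Set V // X ∈ nhdLattice G ∧ P X} := fun n => g^[n] ⟨X₀, h₀, hP⟩
  refine no_desc hchain (fun n => (f n).1) (fun n => (f n).2.1) ?_
  apply strictAnti_nat_of_succ_lt
  intro n
  have : f (n+1) = g (f n) := Function.iterate_succ_apply' g n _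
  rw [this]
  exact hg _

theorem min_inf {V : Type*} {G : SimpleGraph V}
    (hchain : ∀ C : Set (Set V), C ⊆ nhdLattice G → IsChain (· ⊆ ·) C → C.Finite)
    {ι : Type*} (z : ι → V) (J : Set ι) (hJ : J.Infinite) :
    ∃ X ∈ nhdLattice G, {i ∈ J | z i ∈ X}.Infinite ∧
      ∀ y, (∀ x ∈ X, G.Adj y x) ∨ {i ∈ {i ∈ J | z i ∈ X} | G.Adj y (z i)}.Finite := by
  obtain ⟨X, hX, hP, hmin⟩ := exists_min_nhd hchain (fun X => {i ∈ J | z i ∈ X}.Infinite)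
    Set.univ ⟨∅, by simp⟩ (by simpa using hJ)
  refine ⟨X, hX, hP, fun y => ?_⟩
  by_contra hc
  push Not at hc
  obtain ⟨⟨x, hx, hyx⟩, hinf⟩ := hc
  refine hmin _ (nhd_inter hX y) ?_ ?_
  · refine Set.Infinite.mono ?_ hinf
    rintro i ⟨⟨h1, h2⟩, h3⟩
    exact ⟨h1, h2, h3⟩
  · refine ⟨Set.inter_subset_left, fun h => hyx (h hx).2⟩

theorem build_G3 {V : Type*} {G : SimpleGraph V} (v : V) (z w : ℕ → V)
    (hvz : ∀ i, G.Adj v (z i)) (hvw : ∀ i, ¬ G.Adj v (w i)) (hzw : ∀ i, G.Adj (z i) (w i))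
    (hne : ∀ i j, i ≠ j → ¬ G.Adj (z i) (w j)) (hz : ∀ i j, i ≠ j → ¬ G.Adj (z i) (z j))
    (hw : ∀ i j, i ≠ j → ¬ G.Adj (w i) (w j)) : Nonempty (G3 ↪g G) := by
  have hz' : ∀ i j, ¬ G.Adj (z i) (z j) := fun i j => by
    by_cases h : i = j
    · subst h; simp
    · exact hz i j h
  have hw' : ∀ i j, ¬ G.Adj (w i) (w j) := fun i j => by
    by_cases h : i = j
    · subst h; simp
    · exact hw i j h
  have hzw' : ∀ i j, G.Adj (z i) (w j) ↔ i = j := fun i j =>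
    ⟨fun h => by by_contra hc; exact hne i j hc h, fun h => h ▸ hzw i⟩
  have hwz' : ∀ i j, G.Adj (w i) (z j) ↔ i = j := fun i j => by
    rw [G.adj_comm, hzw', eq_comm]
  have hvw1 : ∀ i, v ≠ w i := fun i h => by
    have := hvz (i+1)
    rw [h, G.adj_comm, hzw'] at this
    omega
  have hvz1 : ∀ i, v ≠ z i := fun i => (hvz i).ne
  have hzw1 : ∀ i j, z i ≠ w j := fun i j h => hvw j (h ▸ hvz i)
  have hz1 : ∀ i j, z i = z j ↔ i = j := fun i j =>
    ⟨fun h => ((hzw' j i).1 (h ▸ hzw i)).symm, fun h => h ▸ rfl⟩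
  have hw1 : ∀ i j, w i = w j ↔ i = j := fun i j =>
    ⟨fun h => ((hzw' i j).1 (h ▸ hzw i)), fun h => h ▸ rfl⟩
  have hvw2 : ∀ i, ¬ G.Adj (w i) v := fun i h => hvw i h.symm
  have hvz2 : ∀ i, G.Adj (z i) v := fun i => (hvz i).symm
  let f : Option (ℕ ⊕ ℕ) → V := fun o => match o with
    | none => v
    | some (Sum.inl i) => w i
    | some (Sum.inr i) => z i
  have hf : ∀ x y, G.Adj (f x) (f y) ↔ G3.Adj x y := by
    rintro (_ | i | i) (_ | j | j)
    all_goals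
      simp [f, G3, hvz, hvw, hzw', hwz', hz', hw', hvw2, hvz2, eq_comm]
  refine ⟨⟨⟨f, ?_⟩, fun {x y} => hf x y⟩⟩
  · rintro (_ | i | i) (_ | j | j) h
    · rfl
    · exact absurd h (hvw1 j)
    · exact absurd h (hvz1 j)
    · exact absurd h.symm (hvw1 i)
    · have := (hw1 i j).1 h
      subst this; rfl
    · exact absurd h.symm (hzw1 j i)
    · exact absurd h.symm (hvz1 i)
    · exact absurd h (hzw1 i j)
    · have := (hz1 i j).1 h
      subst this; rfl

theorem get_G3 {V : Type*} {G : SimpleGraph V}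
    (hchain : ∀ C : Set (Set V), C ⊆ nhdLattice G → IsChain (· ⊆ ·) C → C.Finite)
    (v : V) (z w : ℕ → V)
    (hvz : ∀ i, G.Adj v (z i)) (hvw : ∀ i, ¬ G.Adj v (w i)) (hzw : ∀ i, G.Adj (z i) (w i))
    (hlt : ∀ i j, i < j → ¬ G.Adj (z i) (w j)) : Nonempty (G3 ↪g G) := by
  obtain ⟨X, -, hinf, hX⟩ := min_inf hchain z Set.univ Set.infinite_univ
  obtain ⟨i₀, hi₀⟩ := hinf.nonempty
  set J1 := {i ∈ (Set.univ : Set ℕ) | z i ∈ X} with hJ1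
  have hJ2 : (J1 \ Set.Iic i₀).Infinite := hinf.sdiff (Set.finite_Iic i₀)
  obtain ⟨X', -, hinf', hX'⟩ := min_inf hchain w _ hJ2
  set J3 := {i ∈ J1 \ Set.Iic i₀ | w i ∈ X'} with hJ3
  have hsub : ∀ i ∈ J3, i ∈ J1 := fun i hi => hi.1.1
  obtain ⟨f, hfJ, hf⟩ := greedy_seq J3 hinf' (fun i j => i < j ∧ ¬ G.Adj (z i) (z j) ∧
    ¬ G.Adj (w i) (w j) ∧ ¬ G.Adj (w i) (z j)) (by
      intro i hi
      have f1 : {j ∈ J1 | G.Adj (z i) (z j)}.Finite := by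
        rcases hX (z i) with h | h
        · exact absurd (h _ (hsub i hi).2) (G.irrefl)
        · exact h
      have f2 : {j ∈ J3 | G.Adj (w i) (w j)}.Finite := by
        rcases hX' (w i) with h | h
        · exact absurd (h _ hi.2) (G.irrefl)
        · exact h
      have f3 : {j ∈ J1 | G.Adj (w i) (z j)}.Finite := by
        rcases hX (w i) with h | h
        · have hi' : i₀ < i := by simpa using hi.1.2
          exact absurd (h _ hi₀.2).symm (hlt _ _ hi')
        · exact h
      refine ((((Set.finite_Iic i).union f1).union f2).union f3).subset ?_
      rintro j ⟨hj, hn⟩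
      by_contra hc
      simp only [Set.mem_union, Set.mem_Iic, Set.mem_ofPred_eq, not_or, not_and, not_le] at hc
      exact hn ⟨hc.1.1.1, hc.1.1.2 (hsub j hj), hc.1.2 hj, hc.2 (hsub j hj)⟩)
  refine build_G3 v (z ∘ f) (w ∘ f) (fun i => hvz _) (fun i => hvw _) (fun i => hzw _) ?_ ?_ ?_
  · intro i j hij
    rcases lt_or_gt_of_ne hij with h | h
    · exact hlt _ _ (hf _ _ h).1
    · exact fun h' => (hf _ _ h).2.2.2 h'.symm
  · intro i j hij
    rcases lt_or_gt_of_ne hij with h | h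
    · exact (hf _ _ h).2.1
    · exact fun h' => (hf _ _ h).2.1 h'.symm
  · intro i j hij
    rcases lt_or_gt_of_ne hij with h | h
    · exact (hf _ _ h).2.2.1
    · exact fun h' => (hf _ _ h).2.2.1 h'.symm

theorem build_G2 {W : Type*} {H : SimpleGraph W} (r : W) (v : ℕ → W)
    (hconn : H.Connected)
    (hd : ∀ n, H.dist r (v n) = n) (ha : ∀ n, H.Adj (v n) (v (n+1))) : Nonempty (G2 ↪g H) := by
  have hinj : Function.Injective v := fun m n h => by
    rw [← hd m, h, hd n]
  have hle : ∀ m n, H.Adj (v m) (v n) → n ≤ m + 1 := fun m n h => by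
    have h1 := hconn.dist_triangle (u := r) (v := v m) (w := v n)
    rw [hd, hd, SimpleGraph.dist_eq_one_iff_adj.2 h] at h1
    exact h1
  have hadj : ∀ m n, H.Adj (v m) (v n) ↔ (n = m + 1 ∨ m = n + 1) := by
    intro m n
    constructor
    · intro h
      have h1 := hle _ _ h
      have h2 := hle _ _ h.symm
      have h3 : m ≠ n := fun e => h.ne (by rw [e])
      omega
    · rintro (rfl | rfl)
      · exact ha _
      · exact (ha _).symm
  let f : ℕ ⊕ ℕ → W := fun o => match o with
    | Sum.inl i => v (2 * i + 1)
    | Sum.inr j => v (2 * j)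
  have hf : ∀ x y, H.Adj (f x) (f y) ↔ G2.Adj x y := by
    rintro (i | i) (j | j)
    all_goals
      simp [f, G2, hadj]
    all_goals omega
  refine ⟨⟨⟨f, ?_⟩, fun {x y} => hf x y⟩⟩
  · rintro (i | i) (j | j) h
    all_goals
      have h' := hinj h
      first
        | (exfalso; omega)
        | (congr 1; omega)

theorem geodesic_step {W : Type*} {H : SimpleGraph W} (hconn : H.Connected) (v u : W)
    (h : v ≠ u) : ∃ z, H.Adj v z ∧ H.dist v u = 1 + H.dist z u := by
  obtain ⟨p, hp⟩ := hconn.exists_walk_length_eq_dist v u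
  cases p with
  | nil => exact absurd rfl h
  | cons ha q =>
    rename_i z
    refine ⟨z, ha, ?_⟩
    have h1 := SimpleGraph.dist_le q
    have h2 := hconn.dist_triangle (u := v) (v := z) (w := u)
    rw [SimpleGraph.dist_eq_one_iff_adj.2 ha] at h2
    simp only [SimpleGraph.Walk.length_cons] at hp
    omega

/-- Elements of `U` lying on a geodesic from `r` through `v`. -/
def Desc {W : Type*} (H : SimpleGraph W) (r : W) (U : Set W) (v : W) : Set W :=
  {u ∈ U | H.dist r u = H.dist r v + H.dist v u}

theorem desc_step {W : Type*} {H : SimpleGraph W} (hconn : H.Connected) (r : W) (U : Set W)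
    (hU : ∀ y, {u ∈ U | H.Adj y u}.Finite)
    (hno : ∀ (v : W) (z w : ℕ → W), (∀ i, H.Adj v (z i)) → (∀ i, ¬ H.Adj v (w i)) →
      (∀ i, H.Adj (z i) (w i)) → (∀ i j, i < j → ¬ H.Adj (z i) (w j)) → False)
    (v : W) (hv : (Desc H r U v).Infinite) :
    ∃ z, H.Adj v z ∧ H.dist r z = H.dist r v + 1 ∧ (Desc H r U z).Infinite := by
  by_contra hc
  push Not at hc
  have tri := fun a b c => hconn.dist_triangle (u := a) (v := b) (w := c)
  have one : ∀ {a b}, H.Adj a b → H.dist a b = 1 := fun h => SimpleGraph.dist_eq_one_iff_adj.2 h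
  obtain ⟨f, hf1, hf2⟩ := exists_seq_of_forall_finset_exists
    (fun t : W × W × W => H.Adj v t.1 ∧ H.dist r t.1 = H.dist r v + 1 ∧ H.Adj t.1 t.2.1 ∧
      H.dist r t.2.1 = H.dist r v + 2 ∧ t.2.2 ∈ U ∧
      H.dist r t.2.2 = H.dist r v + 2 + H.dist t.2.1 t.2.2)
    (fun t t' => t'.2.2 ∉ Desc H r U t.1) (by
      intro s hs
      have hfin : (⋃ t ∈ s, Desc H r U t.1).Finite :=
        Set.Finite.biUnion s.finite_toSet (fun t ht =>
          hc t.1 (hs t ht).1 (hs t ht).2.1)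
      obtain ⟨u, hu1, hu2⟩ := (hv.sdiff ((hfin.union (hU v)).union (Set.finite_singleton v))).nonempty
      simp only [Set.mem_union, Set.mem_singleton_iff, not_or] at hu2
      obtain ⟨⟨hu3, hu4⟩, hu5⟩ := hu2
      obtain ⟨z, hz1, hz2⟩ := geodesic_step hconn v u (fun h => hu5 h.symm)
      obtain ⟨w, hw1, hw2⟩ := geodesic_step hconn z u (fun h => hu4 ⟨hu1.1, h ▸ hz1⟩)
      have e := hu1.2
      have t1 := tri r v z
      have t2 := tri r z u
      have t3 := tri r z w
      have t4 := tri r w u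
      rw [one hz1] at t1
      rw [one hw1] at t3
      refine ⟨(z, w, u), ⟨hz1, by simp only; omega, hw1, by simp only; omega, hu1.1, by simp only; omega⟩, ?_⟩
      intro t ht hmem
      exact hu3 (Set.mem_biUnion (Finset.mem_coe.2 ht) hmem))
  refine hno v (fun n => (f n).1) (fun n => (f n).2.1) (fun n => (hf1 n).1) ?_
    (fun n => (hf1 n).2.2.1) ?_
  · intro i h
    have t1 := tri r v (f i).2.1
    rw [one h, (hf1 i).2.2.2.1] at t1
    omega
  · intro i j hij h
    obtain ⟨a1, a2, a3, a4, a5, a6⟩ := hf1 j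
    have b := (hf1 i).2.1
    apply hf2 i j hij
    refine ⟨a5, ?_⟩
    have t1 := tri (f i).1 (f j).2.1 (f j).2.2
    have t2 := tri r (f i).1 (f j).2.2
    rw [one h] at t1
    omega

theorem ray_lemma {W : Type*} {H : SimpleGraph W} (hconn : H.Connected) (U : Set W)
    (hinf : U.Infinite)
    (hU : ∀ y, {u ∈ U | H.Adj y u}.Finite)
    (hno : ∀ (v : W) (z w : ℕ → W), (∀ i, H.Adj v (z i)) → (∀ i, ¬ H.Adj v (w i)) →
      (∀ i, H.Adj (z i) (w i)) → (∀ i j, i < j → ¬ H.Adj (z i) (w j)) → False) :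
    Nonempty (G2 ↪g H) := by
  obtain ⟨r, -⟩ := hinf.nonempty
  have step : ∀ v : {v // (Desc H r U v).Infinite}, ∃ z : {v // (Desc H r U v).Infinite},
      H.Adj v.1 z.1 ∧ H.dist r z.1 = H.dist r v.1 + 1 := by
    rintro ⟨v, hv⟩
    obtain ⟨z, h1, h2, h3⟩ := desc_step hconn r U hU hno v hv
    exact ⟨⟨z, h3⟩, h1, h2⟩
  choose g hg using step
  have h0 : (Desc H r U r).Infinite := by
    refine hinf.mono fun u hu => ⟨hu, by simp⟩
  let f : ℕ → {v // (Desc H r U v).Infinite} := fun n => g^[n] ⟨r, h0⟩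
  have hs : ∀ n, f (n+1) = g (f n) := fun n => Function.iterate_succ_apply' g n _
  refine build_G2 r (fun n => (f n).1) hconn ?_ ?_
  · intro n
    induction n with
    | zero => simp [f]
    | succ n ih => rw [hs, (hg _).2, ih]
  · intro n
    simp only [hs]
    exact (hg _).1

/-- A vertex mixed on a connected set distinguishes the ends of some edge. -/
theorem mixed_edge {V : Type*} {G : SimpleGraph V} {Y : Set V}
    (c : (G.induce Y).ConnectedComponent) (s : V) (p q : Y)
    (hp : (G.induce Y).connectedComponentMk p = c) (hq : (G.induce Y).connectedComponentMk q = c)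
    (h1 : G.Adj s p) (h2 : ¬ G.Adj s q) :
    ∃ p q : Y, (G.induce Y).connectedComponentMk p = c ∧
      (G.induce Y).connectedComponentMk q = c ∧ G.Adj p q ∧ G.Adj s p ∧ ¬ G.Adj s q := by
  have hr : (G.induce Y).Reachable p q := SimpleGraph.ConnectedComponent.exact (hp.trans hq.symm)
  obtain ⟨wk⟩ := (SimpleGraph.ConnectedComponent.connected_toSimpleGraph c).preconnected
    ⟨p, hp⟩ ⟨q, hq⟩
  obtain ⟨d, -, hd1, hd2⟩ := wk.exists_boundary_dart {x | G.Adj s x.1.1} h1 h2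
  exact ⟨d.fst.1, d.snd.1, d.fst.2, d.snd.2, d.adj, hd1, hd2⟩

/-- If `G` is an infinite prime graph all of whose chains in the neighborhood
lattice are finite, then `G` embeds `G2` or `G3`. -/
theorem infinite_prime_graph_finite_chains {V : Type*} [Infinite V]
    (G : SimpleGraph V) (hprime : PrimeGraph G)
    (hchain : ∀ C : Set (Set V), C ⊆ nhdLattice G → IsChain (· ⊆ ·) C → C.Finite) :
    Nonempty (G2 ↪g G) ∨ Nonempty (G3 ↪g G) := by
  classical
  by_contra hcon
  push Not at hcon
  obtain ⟨hG2, hG3⟩ := hcon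
  have no3 : ∀ (v : V) (z w : ℕ → V), (∀ i, G.Adj v (z i)) → (∀ i, ¬ G.Adj v (w i)) →
      (∀ i, G.Adj (z i) (w i)) → (∀ i j, i < j → ¬ G.Adj (z i) (w j)) → False :=
    fun v z w h1 h2 h3 h4 => (not_nonempty_iff.2 hG3) (get_G3 hchain v z w h1 h2 h3 h4)
  obtain ⟨X, -, hinf, hX⟩ := min_inf hchain (id : V → V) Set.univ Set.infinite_univ
  simp only [id, Set.mem_univ, true_and, Set.ofPred_mem_eq, Set.mem_ofPred_eq] at hinf hX
  let Y : Set V := {y | ¬ ∀ x ∈ X, G.Adj y x}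
  have hXY : ∀ x ∈ X, x ∈ Y := fun x hx h => G.irrefl (h x hx)
  have hYc : ∀ y, y ∉ Y → ∀ x ∈ X, G.Adj y x := fun y hy => by simpa [Y] using hy
  have hYf : ∀ y ∈ Y, {x ∈ X | G.Adj y x}.Finite := fun y hy => (hX y).resolve_left hy
  let H := G.induce Y
  let D : H.ConnectedComponent → Set V := fun c => {v | ∃ h : v ∈ Y, H.connectedComponentMk ⟨v, h⟩ = c}
  have hDadj : ∀ c, ∀ a ∈ D c, ∀ y ∈ Y, G.Adj y a → y ∈ D c := by
    rintro c a ⟨ha, rfl⟩ y hy hya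
    exact ⟨hy, SimpleGraph.ConnectedComponent.sound (SimpleGraph.Adj.reachable (show H.Adj ⟨y, hy⟩ ⟨a, ha⟩ from hya))⟩
  have hDdisj : ∀ c c' v, v ∈ D c → v ∈ D c' → c = c' := by
    rintro c c' v ⟨h, rfl⟩ ⟨h', rfl⟩; rfl
  have hfib : ∀ c, (X ∩ D c).Finite := by
    intro c
    by_contra hi
    have hi : (X ∩ D c).Infinite := hi
    let φ : c.toSimpleGraph ↪g G :=
      (SimpleGraph.Embedding.induce (G := H) c.supp).trans (SimpleGraph.Embedding.induce (G := G) Y)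
    have hφ : ∀ x, φ x = x.1.1 := fun x => rfl
    have hray := ray_lemma (SimpleGraph.ConnectedComponent.connected_toSimpleGraph c) (φ ⁻¹' X)
      (by
        intro hf
        refine hi ((hf.image φ).subset ?_)
        rintro x ⟨hx, h, hc⟩
        exact ⟨⟨⟨x, h⟩, hc⟩, hx, rfl⟩)
      (by
        intro y
        refine Set.Finite.of_finite_image (f := φ) ((hYf y.1.1 y.1.2).subset ?_) φ.injective.injOn
        rintro _ ⟨u, ⟨hu1, hu2⟩, rfl⟩
        exact ⟨hu1, φ.map_rel_iff.2 hu2⟩)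
      (by
        intro v z w h1 h2 h3 h4
        exact no3 (φ v) (φ ∘ z) (φ ∘ w) (fun i => φ.map_rel_iff.2 (h1 i))
          (fun i h => h2 i (φ.map_rel_iff.1 h)) (fun i => φ.map_rel_iff.2 (h3 i))
          (fun i j hij h => h4 i j hij (φ.map_rel_iff.1 h)))
    obtain ⟨e⟩ := hray
    exact hG2.false (e.trans φ)
  let C₀ : Set H.ConnectedComponent := {c | (X ∩ D c).Nonempty}
  have hC₀ : C₀.Infinite := by
    intro hf
    refine hinf ((Set.Finite.biUnion hf (fun c _ => hfib c)).subset ?_)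
    intro x hx
    have hm : x ∈ D (H.connectedComponentMk ⟨x, hXY x hx⟩) := ⟨hXY x hx, rfl⟩
    exact Set.mem_biUnion (show _ ∈ C₀ from ⟨x, hx, hm⟩) ⟨hx, hm⟩
  have hsing : {c ∈ C₀ | ∃ x, D c = {x}}.Subsingleton := by
    rintro c ⟨⟨x', hx, hxD⟩, x, hDx⟩ c' ⟨⟨y', hy, hyD⟩, y, hDy⟩
    by_contra hcc
    have e1 : x' = x := by rw [hDx] at hxD; exact hxD
    have e2 : y' = y := by rw [hDy] at hyD; exact hyD
    subst e1 e2
    have hxy : x' ≠ y' := fun h => hcc (hDdisj _ _ x' hxD (h ▸ hyD))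
    have haut : Autonomous G {x', y'} := by
      intro v hv
      simp only [Set.mem_insert_iff, Set.mem_singleton_iff, not_or] at hv
      by_cases hvY : v ∈ Y
      · right
        rintro a (rfl | rfl) h
        · have := hDadj c _ hxD v hvY h
          rw [hDx] at this
          exact hv.1 this
        · have := hDadj c' _ hyD v hvY h
          rw [hDy] at this
          exact hv.2 this
      · left
        rintro a (rfl | rfl)
        · exact hYc v hvY _ hx
        · exact hYc v hvY _ hy
    rcases hprime.2 _ haut with h | ⟨a, h⟩ | h
    · exact (h ▸ (show x' ∈ ({x', y'} : Set V) by simp) : x' ∈ (∅ : Set V))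
    · have m1 : x' ∈ ({a} : Set V) := h ▸ (show x' ∈ ({x', y'} : Set V) by simp)
      have m2 : y' ∈ ({a} : Set V) := h ▸ (show y' ∈ ({x', y'} : Set V) by simp)
      exact hxy (m1.trans m2.symm)
    · exact Set.infinite_univ (h ▸ Set.toFinite ({x', y'} : Set V))
  let C₁ : Set H.ConnectedComponent := C₀ \ {c ∈ C₀ | ∃ x, D c = {x}}
  have hC₁ : C₁.Infinite := hC₀.sdiff hsing.finite
  have hsplit : ∀ c ∈ C₁, ∃ s, s ∉ Y ∧ ∃ q ∈ D c, ¬ G.Adj s q := by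
    intro c hc
    by_contra hno
    push Not at hno
    have haut : Autonomous G (D c) := by
      intro v hv
      by_cases hvY : v ∈ Y
      · right
        intro a ha h
        exact hv (hDadj c a ha v hvY h)
      · left
        exact hno v hvY
    obtain ⟨x, hx, hxD⟩ := hc.1
    rcases hprime.2 _ haut with h | h | h
    · rw [h] at hxD; exact hxD
    · exact hc.2 ⟨hc.1, h⟩
    · obtain ⟨c', hc', hne⟩ := (hC₁.sdiff (Set.finite_singleton c)).nonempty
      obtain ⟨x', hx', hxD'⟩ := hc'.1
      exact hne (hDdisj c' c x' hxD' (h ▸ Set.mem_univ x'))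
  have hfew : ∀ s, s ∉ Y → {c ∈ C₁ | ∃ q ∈ D c, ¬ G.Adj s q}.Finite := by
    intro s hs
    by_contra hi
    have hi : {c ∈ C₁ | ∃ q ∈ D c, ¬ G.Adj s q}.Infinite := hi
    let cs := hi.natEmbedding
    have key : ∀ n, ∃ p q : Y, H.connectedComponentMk p = (cs n).1 ∧
        H.connectedComponentMk q = (cs n).1 ∧ G.Adj p q ∧ G.Adj s p ∧ ¬ G.Adj s q := by
      intro n
      obtain ⟨c, ⟨⟨x, hx, hx1, hx2⟩, -⟩, q, ⟨hq1, hq2⟩, hq⟩ := cs n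
      exact mixed_edge c s ⟨x, hx1⟩ ⟨q, hq1⟩ hx2 hq2 (hYc s hs x hx) hq
    choose p q k1 k2 k3 k4 k5 using key
    refine no3 s (fun n => p n) (fun n => q n) k4 k5 k3 ?_
    intro i j hij h
    have e : H.connectedComponentMk (p i) = H.connectedComponentMk (q j) :=
      SimpleGraph.ConnectedComponent.sound (SimpleGraph.Adj.reachable (show H.Adj _ _ from h))
    rw [k1, k2] at e
    exact hij.ne (cs.injective (Subtype.ext e))
  choose! s hsY q hqD hsq using hsplit
  obtain ⟨f, hf1, hf2⟩ := greedy_seq C₁ hC₁ (fun c c' => G.Adj (s c) (q c')) (by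
    intro c hc
    refine (hfew (s c) (hsY c hc)).subset ?_
    rintro c' ⟨hc', h⟩
    exact ⟨hc', q c', hqD c' hc', h⟩)
  refine no_desc hchain (fun n => ⋂ x ∈ (fun m => s (f m)) '' Set.Iio n, G.neighborSet x)
    (fun n => ⟨_, rfl⟩) ?_
  apply strictAnti_nat_of_succ_lt
  intro n
  refine ⟨?_, ?_⟩
  · apply Set.biInter_subset_biInter_left
    apply Set.image_mono
    exact Set.Iio_subset_Iio (Nat.le_succ n)
  · intro hle
    have hm : q (f n) ∈ ⋂ x ∈ (fun m => s (f m)) '' Set.Iio n, G.neighborSet x := by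
      simp only [Set.mem_iInter]
      rintro _ ⟨m, hm, rfl⟩
      exact hf2 m n hm
    have h2 := hle hm
    simp only [Set.mem_iInter] at h2
    exact hsq _ (hf1 n) (h2 _ ⟨n, Nat.lt_succ_self n, rfl⟩)
end
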